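/- Let H = K_{n₁,n₂,…,n_k} be the complete k-partite graph with parts of sizes n₁,…,n_k ≥ 1, and for each j let g_j(λ) = ∏_{i≠j}(n_i + λ). Then the coronal of H is χ_H(λ) = (∑_{j=1}^k n_j g_j(λ)) / (∏_{i=1}^k (n_i + λ) − ∑_{j=1}^k n_j g_j(λ)) as an element of ℂ(λ). -/

import Mathlib

open Matrix Polynomial

/-- The characteristic matrix `λ I - B` of `B`, over the field `ℂ(λ)` of rational functions. -/
noncomputable def charMatRatFunc {V : Type*} [Fintype V] [DecidableEq V]
    (B : Matrix V V ℂ) : Matrix V V (RatFunc ℂ) :=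
  Matrix.scalar V (RatFunc.X : RatFunc ℂ) - B.map (algebraMap ℂ (RatFunc ℂ))

/-- The coronal of a matrix `B`: the sum of the entries of `(λ I - B)⁻¹` over `ℂ(λ)`. -/
noncomputable def coronal {V : Type*} [Fintype V] [DecidableEq V]
    (B : Matrix V V ℂ) : RatFunc ℂ :=
  ∑ i, ∑ j, (charMatRatFunc B)⁻¹ i j

/-- The adjacency matrix of the corona `G ∘ H`. -/
def coronaMatrix {α β : Type*} (A : Matrix α α ℂ) (B : Matrix β β ℂ)
    [DecidableEq α] :
    Matrix (α ⊕ β × α) (α ⊕ β × α) ℂ :=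
  Matrix.fromBlocks A
    (Matrix.of fun i p => if i = p.2 then 1 else 0)
    (Matrix.of fun p j => if p.2 = j then 1 else 0)
    (Matrix.of fun p q => if p.2 = q.2 then B p.1 q.1 else 0)


/-- The adjacency matrix of the complete `k`-partite graph `K_{n₁,…,n_k}`: two vertices are
adjacent exactly when they lie in different parts. -/
def completeMultipartiteMatrix {k : ℕ} (n : Fin k → ℕ) :
    Matrix ((j : Fin k) × Fin (n j)) ((j : Fin k) × Fin (n j)) ℂ :=
  Matrix.of fun a b => if a.1 = b.1 then 0 else 1

/-!
If `(λI - B) w = c • 1`, then the coronal `χ` is `(∑ w) / c` as soon as `c ≠ 0`: summing the entries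
of `w = c • (λI - B)⁻¹ 1` gives `∑ w = χ c`. For the complete multipartite graph take `w` to be
`gⱼ(λ)` on the `j`-th part. As `(nⱼ + λ) gⱼ(λ)` is the full product `P = ∏ᵢ (nᵢ + λ)` for every `j`,
the equation holds with `c = P - N`, where `N = ∑ⱼ nⱼ gⱼ(λ)` is also the sum of the entries of `w`.
Thus `χ (P - N) = N`, which rearranges to `(χ + 1) (P - N) = P ≠ 0`, so `P - N` is nonzero.
-/

theorem sum_inv_mul_eq_sum_of_mulVec_eq_const {V R : Type*} [Fintype V] [DecidableEq V]
    [CommRing R] {M : Matrix V V R} (hM : IsUnit M.det) {w : V → R} {c : R}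
    (hw : M *ᵥ w = fun _ => c) : (∑ i, ∑ j, M⁻¹ i j) * c = ∑ i, w i := by
  have w_eq : w = M⁻¹ *ᵥ fun _ => c := by
    rw [← hw, mulVec_mulVec, nonsing_inv_mul _ hM, one_mulVec]
  simp only [w_eq, mulVec, dotProduct, Finset.sum_mul]

theorem sum_sigma_fin_comp_fst {ι R : Type*} [Fintype ι] [NonAssocSemiring R] (n : ι → ℕ)
    (u : ι → R) : ∑ a : (j : ι) × Fin (n j), u a.1 = ∑ j, n j * u j := by
  simp [Fintype.sum_sigma]

theorem natCast_add_ratFunc_X_ne_zero {R : Type*} [CommRing R] [IsDomain R] (m : ℕ) :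
    (m : RatFunc R) + RatFunc.X ≠ 0 := by
  have h : algebraMap R[X] (RatFunc R) (X + C (m : R)) ≠ 0 :=
    RatFunc.algebraMap_ne_zero (X_add_C_ne_zero _)
  simpa [add_comm] using h

section Coronal

variable {V : Type*} [Fintype V] [DecidableEq V]

theorem charMatRatFunc_eq_mapMatrix_charmatrix (B : Matrix V V ℂ) :
    charMatRatFunc B = (algebraMap ℂ[X] (RatFunc ℂ)).mapMatrix B.charmatrix := by
  ext i j
  by_cases hij : i = j <;> simp [charMatRatFunc, hij]

theorem isUnit_det_charMatRatFunc (B : Matrix V V ℂ) : IsUnit (charMatRatFunc B).det := by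
  rw [charMatRatFunc_eq_mapMatrix_charmatrix, ← RingHom.map_det]
  exact (RatFunc.algebraMap_ne_zero B.charpoly_monic.ne_zero).isUnit

theorem coronal_mul_eq_sum_of_mulVec_eq_const {B : Matrix V V ℂ} {w : V → RatFunc ℂ}
    {c : RatFunc ℂ} (hw : charMatRatFunc B *ᵥ w = fun _ => c) : coronal B * c = ∑ i, w i :=
  sum_inv_mul_eq_sum_of_mulVec_eq_const (isUnit_det_charMatRatFunc B) hw

theorem charMatRatFunc_mulVec_apply (B : Matrix V V ℂ) (w : V → RatFunc ℂ) (a : V) :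
    (charMatRatFunc B *ᵥ w) a =
      RatFunc.X * w a - ∑ b, algebraMap ℂ (RatFunc ℂ) (B a b) * w b := by
  simp [charMatRatFunc, mulVec, dotProduct, diagonal_apply, sub_mul]

end Coronal

section CompleteMultipartite

variable {k : ℕ} (n : Fin k → ℕ)

theorem charMatRatFunc_completeMultipartiteMatrix_mulVec_comp_fst (u : Fin k → RatFunc ℂ) :
    charMatRatFunc (completeMultipartiteMatrix n) *ᵥ (fun a => u a.1) =
      fun a => ((n a.1 : RatFunc ℂ) + RatFunc.X) * u a.1 - ∑ j, n j * u j := by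
  funext a
  have sum_adj : ∑ b, algebraMap ℂ (RatFunc ℂ) (completeMultipartiteMatrix n a b) * u b.1 =
      ∑ j, n j * u j - n a.1 * u a.1 := by
    calc _ = ∑ b : (j : Fin k) × Fin (n j), (u b.1 - if a.1 = b.1 then u b.1 else 0) := by
          refine Finset.sum_congr rfl fun b _ => ?_
          by_cases hab : a.1 = b.1 <;> simp [completeMultipartiteMatrix, hab]
      _ = ∑ j, n j * (u j - if a.1 = j then u j else 0) :=
          sum_sigma_fin_comp_fst n fun j => u j - if a.1 = j then u j else 0
      _ = _ := by simp [mul_sub]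
  rw [charMatRatFunc_mulVec_apply, sum_adj]
  ring

theorem coronal_completeMultipartiteMatrix_mul :
    coronal (completeMultipartiteMatrix n) *
        (∏ i, ((n i : RatFunc ℂ) + RatFunc.X) -
          ∑ j, (n j : RatFunc ℂ) * ∏ i ∈ Finset.univ.erase j, ((n i : RatFunc ℂ) + RatFunc.X)) =
      ∑ j, (n j : RatFunc ℂ) * ∏ i ∈ Finset.univ.erase j, ((n i : RatFunc ℂ) + RatFunc.X) := by
  let g : Fin k → RatFunc ℂ := fun j => ∏ i ∈ Finset.univ.erase j, ((n i : RatFunc ℂ) + RatFunc.X)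
  have g_mul (j : Fin k) :
      ((n j : RatFunc ℂ) + RatFunc.X) * g j = ∏ i, ((n i : RatFunc ℂ) + RatFunc.X) :=
    Finset.mul_prod_erase _ (fun i => (n i : RatFunc ℂ) + RatFunc.X) (Finset.mem_univ j)
  have charMat_mulVec : charMatRatFunc (completeMultipartiteMatrix n) *ᵥ (fun a => g a.1) =
      fun _ => ∏ i, ((n i : RatFunc ℂ) + RatFunc.X) - ∑ j, n j * g j := by
    simp only [charMatRatFunc_completeMultipartiteMatrix_mulVec_comp_fst, g_mul]
  rw [coronal_mul_eq_sum_of_mulVec_eq_const charMat_mulVec, sum_sigma_fin_comp_fst]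

end CompleteMultipartite

/-- The coronal of the complete `k`-partite graph `K_{n₁,…,n_k}` is
`(∑ⱼ nⱼ gⱼ(λ)) / (∏ᵢ (nᵢ + λ) - ∑ⱼ nⱼ gⱼ(λ))`, where `gⱼ(λ) = ∏_{i ≠ j} (nᵢ + λ)`. -/
theorem coronal_completeMultipartite {k : ℕ} (n : Fin k → ℕ) (hn : ∀ j, 1 ≤ n j) :
    coronal (completeMultipartiteMatrix n) =
      (∑ j, (n j : RatFunc ℂ) * ∏ i ∈ Finset.univ.erase j, ((n i : RatFunc ℂ) + RatFunc.X)) /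
        (∏ i, ((n i : RatFunc ℂ) + RatFunc.X) -
          ∑ j, (n j : RatFunc ℂ) * ∏ i ∈ Finset.univ.erase j, ((n i : RatFunc ℂ) + RatFunc.X)) := by
  have coronal_mul := coronal_completeMultipartiteMatrix_mul n
  have prod_ne_zero : ∏ i, ((n i : RatFunc ℂ) + RatFunc.X) ≠ 0 :=
    Finset.prod_ne_zero_iff.mpr fun i _ => natCast_add_ratFunc_X_ne_zero (n i)
  refine eq_div_of_mul_eq (fun denom_eq_zero => prod_ne_zero ?_) coronal_mul
  linear_combination (coronal (completeMultipartiteMatrix n) + 1) * denom_eq_zero - coronal_mul
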